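/- arXiv:1909.02676 — 2 statements merged into one kernel-verified Lean document; each statement's English description precedes it below -/
import Mathlib

section
/- Let n ≥ 1 and fix a signed permutation matrix q with det q = 1. Then the set of k ∈ SO(n,ℝ) for which there exist a matrix u upper triangular with positive diagonal, a unit lower triangular matrix l, and a diagonal matrix m with diagonal entries in {1,−1} and det m = 1, such that k = u·l·m·q, is open and dense in SO(n,ℝ) (with the subspace topology induced from the normed space of real n×n matrices). -/
open Matrix

/-- Unit lower triangular: `1`s on the diagonal, `0`s above it. -/
def IsUnitLower {n : ℕ} (M : Matrix (Fin n) (Fin n) ℝ) : Prop :=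
  (∀ i, M i i = 1) ∧ ∀ i j : Fin n, i < j → M i j = 0

/-- Upper triangular with strictly positive diagonal entries. -/
def IsUpperPos {n : ℕ} (M : Matrix (Fin n) (Fin n) ℝ) : Prop :=
  (∀ i j : Fin n, j < i → M i j = 0) ∧ ∀ i, 0 < M i i

/-- `SO(n,ℝ)`. -/
def IsSO {n : ℕ} (k : Matrix (Fin n) (Fin n) ℝ) : Prop :=
  kᵀ * k = 1 ∧ k.det = 1

/-- Signed permutation matrix: exactly one nonzero entry, equal to `±1`,
in each row and column. -/
def IsSignedPerm {n : ℕ} (q : Matrix (Fin n) (Fin n) ℝ) : Prop :=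
  ∃ σ : Equiv.Perm (Fin n), ∃ ε : Fin n → ℝ, (∀ i, ε i = 1 ∨ ε i = -1) ∧
    ∀ a b : Fin n, q a b = if a = σ b then ε b else 0

/-- Matrices in `SO(n,ℝ)` admitting a factorization `u · l · m · q` with `u` upper
triangular with positive diagonal, `l` unit lower triangular, and `m` diagonal with
entries `±1` and determinant `1`, viewed inside `SO(n,ℝ)` with its subspace topology. -/
def FactorSet {n : ℕ} (q : Matrix (Fin n) (Fin n) ℝ) :
    Set {k : Matrix (Fin n) (Fin n) ℝ // IsSO k} :=
  { k | ∃ u l : Matrix (Fin n) (Fin n) ℝ, ∃ d : Fin n → ℝ,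
      IsUpperPos u ∧ IsUnitLower l ∧ (∀ i, d i = 1 ∨ d i = -1) ∧
      (Matrix.diagonal d).det = 1 ∧ (k : Matrix (Fin n) (Fin n) ℝ) = u * l * Matrix.diagonal d * q }

namespace ULFact

/-- Trailing block of `A` starting at `i`, padded by the identity. -/
noncomputable def T {n : ℕ} (i : Fin n) (A : Matrix (Fin n) (Fin n) ℝ) : Matrix (Fin n) (Fin n) ℝ :=
  Matrix.of fun a b => if i ≤ a ∧ i ≤ b then A a b else if a = b then 1 else 0

/-- All trailing minors are nonzero. -/
def Good {n : ℕ} (A : Matrix (Fin n) (Fin n) ℝ) : Prop := ∀ i, (T i A).det ≠ 0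

lemma T_mul {n : ℕ} (i : Fin n) (U L : Matrix (Fin n) (Fin n) ℝ)
    (hU : ∀ a b, b < a → U a b = 0) : T i (U * L) = T i U * T i L := by
  ext a b
  rw [Matrix.mul_apply]
  by_cases ha : i ≤ a
  · by_cases hb : i ≤ b
    · have : T i (U * L) a b = ∑ c, U a c * L c b := by simp [T, ha, hb, Matrix.mul_apply]
      rw [this]
      refine Finset.sum_congr rfl fun c _ => ?_
      by_cases hc : i ≤ c
      · simp [T, ha, hb, hc]
      · have hca : c < a := lt_of_lt_of_le (not_le.mp hc) ha
        simp [T, ha, hb, hc, hU a c hca, hca.ne']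
    · have hab : a ≠ b := fun h => hb (h ▸ ha)
      rw [Finset.sum_eq_single b]
      · simp [T, hb, hab]
      · intro c _ hc
        simp [T, hb, hc]
      · simp
  · rw [Finset.sum_eq_single a]
    · simp [T, ha]
    · intro c _ hc
      simp [T, ha, hc.symm]
    · simp

lemma det_T_upper {n : ℕ} (i : Fin n) (U : Matrix (Fin n) (Fin n) ℝ)
    (hU : ∀ a b, b < a → U a b = 0) (hd : ∀ a, U a a ≠ 0) : (T i U).det ≠ 0 := by
  rw [Matrix.det_of_isUpperTriangular]
  · rw [Finset.prod_ne_zero_iff]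
    intro a _
    by_cases ha : i ≤ a <;> simp [T, ha, hd]
  · intro a b hab
    have hab' : b < a := hab
    simp [T, hU a b hab', hab'.ne']

lemma det_T_lower {n : ℕ} (i : Fin n) (U : Matrix (Fin n) (Fin n) ℝ)
    (hU : ∀ a b, a < b → U a b = 0) (hd : ∀ a, U a a ≠ 0) : (T i U).det ≠ 0 := by
  rw [Matrix.det_of_isLowerTriangular]
  · rw [Finset.prod_ne_zero_iff]
    intro a _
    by_cases ha : i ≤ a <;> simp [T, ha, hd]
  · intro a b hab
    have hab' : a < b := hab
    simp [T, hU a b hab', hab'.ne]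

lemma good_of_factor {n : ℕ} (u l : Matrix (Fin n) (Fin n) ℝ) (d : Fin n → ℝ)
    (hu : IsUpperPos u) (hl : IsUnitLower l) (hd : ∀ i, d i = 1 ∨ d i = -1) :
    Good (u * l * Matrix.diagonal d) := by
  intro i
  rw [Matrix.mul_assoc, T_mul i _ _ hu.1, Matrix.det_mul]
  refine mul_ne_zero (det_T_upper i u hu.1 fun a => (hu.2 a).ne') (det_T_lower i _ ?_ ?_)
  · intro a b hab
    simp [hl.2 a b hab]
  · intro a
    rcases hd a with h | h <;> simp [hl.1 a, h]

lemma exists_factor {n : ℕ} (A : Matrix (Fin n) (Fin n) ℝ) (hA : Good A) (hdet : A.det = 1) :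
    ∃ u l : Matrix (Fin n) (Fin n) ℝ, ∃ d : Fin n → ℝ,
      IsUpperPos u ∧ IsUnitLower l ∧ (∀ i, d i = 1 ∨ d i = -1) ∧
      (Matrix.diagonal d).det = 1 ∧ A = u * l * Matrix.diagonal d := by
  classical
  let W : Matrix (Fin n) (Fin n) ℝ := Matrix.of fun a j => (T j A)⁻¹ a j
  have hTW : ∀ j a, ∑ c, T j A a c * W c j = if a = j then 1 else 0 := by
    intro j a
    have h := Matrix.mul_nonsing_inv (T j A) (isUnit_iff_ne_zero.mpr (hA j))
    have h2 := congrFun (congrFun h a) j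
    rw [Matrix.mul_apply, Matrix.one_apply] at h2
    exact h2
  have hWlow : ∀ a j, a < j → W a j = 0 := by
    intro a j haj
    have h := hTW j a
    rw [Finset.sum_eq_single a] at h
    · simpa [T, not_le.mpr haj, haj.ne] using h
    · intro c _ hc
      simp [T, not_le.mpr haj, hc.symm]
    · simp
  have hAW : ∀ a j, j ≤ a → (A * W) a j = if a = j then 1 else 0 := by
    intro a j hja
    rw [← hTW j a, Matrix.mul_apply]
    refine Finset.sum_congr rfl fun c _ => ?_
    by_cases hc : j ≤ c
    · simp [T, hja, hc]
    · simp [hWlow c j (not_le.mp hc)]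
  set U := A * W with hUdef
  have hU0 : ∀ a b, b < a → U a b = 0 := by
    intro a b hab
    rw [hAW a b hab.le, if_neg hab.ne']
  have hU1 : ∀ a, U a a = 1 := by
    intro a
    rw [hAW a a le_rfl, if_pos rfl]
  have hUdet : U.det = 1 := by
    rw [Matrix.det_of_isUpperTriangular]
    · simp [hU1]
    · intro a b hab
      exact hU0 a b hab
  have hWdet : W.det = 1 := by
    have := hUdet
    rw [hUdef, Matrix.det_mul, hdet, one_mul] at this
    exact this
  have hWunit : IsUnit W.det := by rw [hWdet]; exact isUnit_one
  have : Invertible W := Matrix.invertibleOfIsUnitDet W hWunit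
  have hWbt : W.BlockTriangular OrderDual.toDual := by
    intro a b hab
    exact hWlow a b hab
  have hVbt := Matrix.blockTriangular_inv_of_blockTriangular hWbt
  set V := W⁻¹ with hV
  have hV0 : ∀ a b, a < b → V a b = 0 := fun a b hab => hVbt hab
  have hVdet : V.det = 1 := by
    rw [hV, Matrix.det_nonsing_inv, hWdet]; simp
  have hVprod : ∏ a, V a a = 1 := by
    rw [← hVdet, Matrix.det_of_isLowerTriangular _ hVbt]
  have hVne : ∀ a, V a a ≠ 0 := by
    intro a
    have h : ∏ a, V a a ≠ 0 := by rw [hVprod]; exact one_ne_zero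
    exact Finset.prod_ne_zero_iff.mp h a (Finset.mem_univ a)
  have hAUV : A = U * V := by
    rw [hUdef, Matrix.mul_assoc, Matrix.mul_nonsing_inv _ hWunit, Matrix.mul_one]
  let d : Fin n → ℝ := fun a => V a a / |V a a|
  have habs : ∀ a, |V a a| ≠ 0 := fun a => abs_ne_zero.mpr (hVne a)
  have hd : ∀ a, d a = 1 ∨ d a = -1 := by
    intro a
    rcases lt_or_gt_of_ne (hVne a) with h | h
    · right
      simp only [d]
      rw [abs_of_neg h, div_neg, div_self h.ne]
    · left
      simp only [d]
      rw [abs_of_pos h, div_self h.ne']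
  have hdd : ∀ a, d a * d a = 1 := by
    intro a
    rcases hd a with h | h <;> simp [h]
  refine ⟨U * Matrix.diagonal (fun a => |V a a|),
    Matrix.diagonal (fun a => |V a a|⁻¹) * V * Matrix.diagonal d, d, ⟨?_, ?_⟩, ⟨?_, ?_⟩, hd, ?_, ?_⟩
  · intro a b hab
    simp [hU0 a b hab]
  · intro a
    simp [hU1 a, hVne a]
  · intro a
    rw [Matrix.mul_diagonal, Matrix.diagonal_mul, ← hdd a]
    simp only [d]
    field_simp
  · intro a b hab
    rw [Matrix.mul_diagonal, Matrix.diagonal_mul, hV0 a b hab]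
    simp
  · rw [Matrix.det_diagonal]
    simp only [d]
    rw [Finset.prod_div_distrib, ← Finset.abs_prod, hVprod]
    simp
  · have h1 : Matrix.diagonal d * Matrix.diagonal d = 1 := by
      rw [Matrix.diagonal_mul_diagonal]
      simp [hdd]
    have h2 : Matrix.diagonal (fun a => |V a a|) * Matrix.diagonal (fun a => |V a a|⁻¹) = 1 := by
      rw [Matrix.diagonal_mul_diagonal]
      simp [habs, hVne]
    generalize hE : Matrix.diagonal (fun a => |V a a|) = E at h2 ⊢
    generalize hF : Matrix.diagonal (fun a => |V a a|⁻¹) = F at h2 ⊢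
    calc A = U * (1 * (V * 1)) := by rw [Matrix.mul_one, Matrix.one_mul]; exact hAUV
      _ = U * ((E * F) * (V * (Matrix.diagonal d * Matrix.diagonal d))) := by rw [h1, h2]
      _ = _ := by simp only [Matrix.mul_assoc]

lemma exists_sign {n : ℕ} (A : Matrix (Fin n) (Fin n) ℝ) :
    ∃ d : Fin n → ℝ, (∀ i, d i = 1 ∨ d i = -1) ∧ (Matrix.diagonal d + A).det ≠ 0 := by
  classical
  have key : ∀ s : Finset (Fin n), ∃ d : Fin n → ℝ, (∀ i ∈ s, d i = 1 ∨ d i = -1) ∧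
      (Matrix.diagonal d + A).det ≠ 0 := by
    intro s
    induction s using Finset.induction_on with
    | empty =>
      have hne : (-A).charpoly ≠ 0 := (Matrix.charpoly_monic _).ne_zero
      obtain ⟨t, ht⟩ := Polynomial.exists_eval_ne_zero_of_natDegree_lt_card (-A).charpoly hne
        (by rw [Cardinal.mk_real]; exact Cardinal.nat_lt_continuum _)
      refine ⟨fun _ => t, by simp, ?_⟩
      rw [Matrix.eval_charpoly] at ht
      simpa [Matrix.scalar_apply] using ht
    | insert i s his ih =>
      obtain ⟨d, hd, hdet⟩ := ih
      have hrow : ∀ c : ℝ, (Matrix.diagonal (Function.update d i c) + A).det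
          = c * ((Matrix.diagonal d + A).updateRow i (Pi.single i 1)).det
            + ((Matrix.diagonal d + A).updateRow i (A i)).det := by
        intro c
        rw [← Matrix.det_updateRow_smul, ← Matrix.det_updateRow_add]
        congr 1
        ext a b
        by_cases ha : a = i
        · subst ha
          by_cases hb : a = b
          · subst hb; simp
          · simp [hb, Ne.symm hb]
        · by_cases hb : a = b
          · subst hb; simp [ha]
          · simp [ha, hb]
      have h0 := hrow (d i)
      rw [Function.update_eq_self] at h0
      have : ∃ c : ℝ, (c = 1 ∨ c = -1) ∧
          (Matrix.diagonal (Function.update d i c) + A).det ≠ 0 := by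
        by_contra hcon
        push Not at hcon
        have h1 := hcon 1 (Or.inl rfl)
        have h2 := hcon (-1) (Or.inr rfl)
        rw [hrow] at h1 h2
        apply hdet
        rw [h0]
        have e1 : ((Matrix.diagonal d + A).updateRow i (A i)).det = 0 := by linarith
        have e2 : ((Matrix.diagonal d + A).updateRow i (Pi.single i 1)).det = 0 := by linarith
        rw [e1, e2]; ring
      obtain ⟨c, hc, hc'⟩ := this
      refine ⟨Function.update d i c, ?_, hc'⟩
      intro j hj
      by_cases hji : j = i
      · subst hji; simpa using hc
      · rw [Function.update_of_ne hji]
        exact hd j (Finset.mem_of_mem_insert_of_ne hj hji)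
  obtain ⟨d, hd, h⟩ := key Finset.univ
  exact ⟨d, fun i => hd i (Finset.mem_univ i), h⟩

lemma det_one_sub_ne {n : ℕ} (B : Matrix (Fin n) (Fin n) ℝ) (hB : Bᵀ = -B) :
    (1 - B).det ≠ 0 := by
  have h : (1 + Bᴴ * B).PosDef :=
    Matrix.PosDef.one.add_posSemidef (Matrix.posSemidef_conjTranspose_mul_self B)
  have h2 : (1 + B) * (1 - B) = 1 + Bᴴ * B := by
    rw [Matrix.conjTranspose_eq_transpose_of_trivial, hB]; noncomm_ring
  have h3 := h.det_pos
  rw [← h2, Matrix.det_mul] at h3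
  intro h0
  rw [h0] at h3
  simp at h3

lemma cayley_SO {n : ℕ} (B : Matrix (Fin n) (Fin n) ℝ) (hB : Bᵀ = -B) :
    IsSO ((1 + B) * (1 - B)⁻¹) := by
  have h1 := det_one_sub_ne B hB
  have hdet : (1 + B).det = (1 - B).det := by
    rw [← Matrix.det_transpose (1 - B)]; simp [hB]
  have u1 : IsUnit (1 - B).det := isUnit_iff_ne_zero.mpr h1
  have u2 : IsUnit (1 + B).det := by rw [hdet]; exact u1
  constructor
  · rw [Matrix.transpose_mul, Matrix.transpose_nonsing_inv]
    have e1 : (1 - B)ᵀ = 1 + B := by simp [hB]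
    have e2 : (1 + B)ᵀ = 1 - B := by simp [hB, sub_eq_add_neg]
    rw [e1, e2]
    have hc : (1 - B) * (1 + B) = (1 + B) * (1 - B) := by noncomm_ring
    calc (1 + B)⁻¹ * (1 - B) * ((1 + B) * (1 - B)⁻¹)
        = (1 + B)⁻¹ * ((1 - B) * (1 + B)) * (1 - B)⁻¹ := by simp only [Matrix.mul_assoc]
      _ = ((1 + B)⁻¹ * (1 + B)) * ((1 - B) * (1 - B)⁻¹) := by
          rw [hc]; simp only [Matrix.mul_assoc]
      _ = 1 := by rw [Matrix.nonsing_inv_mul _ u2, Matrix.mul_nonsing_inv _ u1, Matrix.one_mul]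
  · rw [Matrix.det_mul, Matrix.det_nonsing_inv, hdet, Ring.mul_inverse_cancel _ u1]

lemma SO_mul {n : ℕ} {A B : Matrix (Fin n) (Fin n) ℝ} (hA : IsSO A) (hB : IsSO B) :
    IsSO (A * B) := by
  constructor
  · rw [Matrix.transpose_mul, Matrix.mul_assoc, ← Matrix.mul_assoc Aᵀ, hA.1, Matrix.one_mul, hB.1]
  · rw [Matrix.det_mul, hA.2, hB.2, one_mul]

lemma SO_transpose {n : ℕ} {A : Matrix (Fin n) (Fin n) ℝ} (hA : IsSO A) : IsSO Aᵀ := by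
  constructor
  · rw [Matrix.transpose_transpose]; exact mul_eq_one_comm.mp hA.1
  · rw [Matrix.det_transpose, hA.2]

lemma analytic_det {n : ℕ} (M : ℝ → Matrix (Fin n) (Fin n) ℝ)
    (h : ∀ a b, AnalyticOnNhd ℝ (fun t => M t a b) Set.univ) :
    AnalyticOnNhd ℝ (fun t => (M t).det) Set.univ := by
  simp only [Matrix.det_apply']
  refine Finset.analyticOnNhd_fun_sum _ fun σ _ => ?_
  exact analyticOnNhd_const.mul (Finset.analyticOnNhd_fun_prod _ fun a _ => h _ _)

lemma analytic_mul {n : ℕ} (M N : ℝ → Matrix (Fin n) (Fin n) ℝ)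
    (h : ∀ a b, AnalyticOnNhd ℝ (fun t => M t a b) Set.univ)
    (h' : ∀ a b, AnalyticOnNhd ℝ (fun t => N t a b) Set.univ) (a b : Fin n) :
    AnalyticOnNhd ℝ (fun t => (M t * N t) a b) Set.univ := by
  simp only [Matrix.mul_apply]
  exact Finset.analyticOnNhd_fun_sum _ fun c _ => (h a c).mul (h' c b)

lemma analytic_inv {n : ℕ} (M : ℝ → Matrix (Fin n) (Fin n) ℝ)
    (h : ∀ a b, AnalyticOnNhd ℝ (fun t => M t a b) Set.univ) (h0 : ∀ t, (M t).det ≠ 0)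
    (a b : Fin n) : AnalyticOnNhd ℝ (fun t => (M t)⁻¹ a b) Set.univ := by
  simp only [Matrix.inv_def, Matrix.smul_apply, Ring.inverse_eq_inv', smul_eq_mul,
    Matrix.adjugate_apply]
  refine ((analytic_det M h).inv fun t _ => h0 t).mul (analytic_det _ fun c e => ?_)
  by_cases hc : c = b
  · subst hc
    simp only [Matrix.updateRow_self]
    exact analyticOnNhd_const
  · simp only [Matrix.updateRow_ne hc]
    exact h c e

/-- The curve of rotations through `K`. -/
lemma exists_curve {n : ℕ} (K : Matrix (Fin n) (Fin n) ℝ) (hK : IsSO K) :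
    ∃ R : ℝ → Matrix (Fin n) (Fin n) ℝ, (∀ t, IsSO (R t)) ∧ R 0 = K ∧ Good (R 1) ∧
      ∀ a b, AnalyticOnNhd ℝ (fun t => R t a b) Set.univ := by
  obtain ⟨d, hd, hne⟩ := exists_sign K
  set D := Matrix.diagonal d with hD
  have hKK : K * Kᵀ = 1 := mul_eq_one_comm.mp hK.1
  have hDD : D * D = 1 := by
    rw [hD, Matrix.diagonal_mul_diagonal, ← Matrix.diagonal_one]
    congr 1
    ext i
    rcases hd i with h | h <;> simp [h]
  have hDt : Dᵀ = D := by simp [hD]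
  set M := D * Kᵀ with hM
  have hMt : Mᵀ = K * D := by rw [hM, Matrix.transpose_mul, hDt, Matrix.transpose_transpose]
  have hMM : Mᵀ * M = 1 := by
    rw [hMt, hM, Matrix.mul_assoc, ← Matrix.mul_assoc D, hDD, Matrix.one_mul, hKK]
  have hMK : M * K = D := by rw [hM, Matrix.mul_assoc, hK.1, Matrix.mul_one]
  have hu : IsUnit (M + 1).det := by
    rw [isUnit_iff_ne_zero]
    have : (M + 1) * K = D + K := by rw [Matrix.add_mul, hMK, Matrix.one_mul]
    intro h0
    apply hne
    rw [← this, Matrix.det_mul, h0, zero_mul]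
  set N := (M + 1)⁻¹ with hN
  have hN1 : (M + 1) * N = 1 := Matrix.mul_nonsing_inv _ hu
  have hN2 : N * (M + 1) = 1 := Matrix.nonsing_inv_mul _ hu
  set S := (M - 1) * N with hS
  have hSt : Sᵀ = -S := by
    -- multiply by (M+1)ᵀ on the left and (M+1) on the right
    have e1 : (M + 1)ᵀ * Sᵀ = (M - 1)ᵀ := by
      rw [← Matrix.transpose_mul, hS, Matrix.mul_assoc, hN2, Matrix.mul_one]
    have e2 : S * (M + 1) = M - 1 := by rw [hS, Matrix.mul_assoc, hN2, Matrix.mul_one]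
    have e3 : (M + 1)ᵀ * Sᵀ * (M + 1) = (M + 1)ᵀ * (-S) * (M + 1) := by
      rw [e1, Matrix.mul_assoc, Matrix.neg_mul, e2]
      simp only [Matrix.transpose_sub, Matrix.transpose_add, Matrix.transpose_one]
      simp only [Matrix.sub_mul, Matrix.add_mul, Matrix.mul_add, Matrix.mul_sub, Matrix.mul_neg,
        hMM, Matrix.one_mul, Matrix.mul_one]
      abel
    have hNt : Nᵀ * (M + 1)ᵀ = 1 := by rw [← Matrix.transpose_mul, hN1, Matrix.transpose_one]
    calc Sᵀ = Nᵀ * (M + 1)ᵀ * Sᵀ * ((M + 1) * N) := by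
          rw [hNt, hN1, Matrix.one_mul, Matrix.mul_one]
      _ = Nᵀ * ((M + 1)ᵀ * Sᵀ * (M + 1)) * N := by simp only [Matrix.mul_assoc]
      _ = Nᵀ * (M + 1)ᵀ * (-S) * ((M + 1) * N) := by rw [e3]; simp only [Matrix.mul_assoc]
      _ = -S := by rw [hNt, hN1, Matrix.one_mul, Matrix.mul_one]
  have hSk : ∀ t : ℝ, (t • S)ᵀ = -(t • S) := by
    intro t
    rw [Matrix.transpose_smul, hSt, smul_neg]
  refine ⟨fun t => (1 + t • S) * (1 - t • S)⁻¹ * K, ?_, ?_, ?_, ?_⟩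
  · intro t
    exact SO_mul (cayley_SO _ (hSk t)) hK
  · simp
  · have hK1 : (1 + (1:ℝ) • S) * (1 - (1:ℝ) • S)⁻¹ * K = D := by
      have hu1 : IsUnit (1 - S).det := isUnit_iff_ne_zero.mpr (det_one_sub_ne S hSt)
      have e : 1 + S = M * (1 - S) := by
        have e4 : (1 + S) * (M + 1) = M * (1 - S) * (M + 1) := by
          have e2 : S * (M + 1) = M - 1 := by rw [hS, Matrix.mul_assoc, hN2, Matrix.mul_one]
          rw [Matrix.mul_assoc, Matrix.sub_mul, Matrix.add_mul, e2]
          noncomm_ring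
        calc 1 + S = (1 + S) * (M + 1) * N := by rw [Matrix.mul_assoc, hN1, Matrix.mul_one]
          _ = M * (1 - S) := by rw [e4, Matrix.mul_assoc _ _ N, hN1, Matrix.mul_one]
      rw [one_smul, e, Matrix.mul_assoc M, Matrix.mul_nonsing_inv _ hu1, Matrix.mul_one, hMK]
    simp only [hK1]
    have := good_of_factor (1 : Matrix (Fin n) (Fin n) ℝ) 1 d
      ⟨fun i j h => Matrix.one_apply_ne h.ne', fun i => by simp⟩
      ⟨fun i => by simp, fun i j h => Matrix.one_apply_ne h.ne⟩ hd
    simpa using this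
  · intro a b
    refine analytic_mul (fun t => (1 + t • S) * (1 - t • S)⁻¹) (fun _ => K) (fun a b => ?_)
      (fun _ _ => analyticOnNhd_const) a b
    refine analytic_mul (fun t => 1 + t • S) (fun t => (1 - t • S)⁻¹) (fun a b => ?_)
      (fun a b => ?_) a b
    · simp only [Matrix.add_apply, Matrix.smul_apply, smul_eq_mul]
      exact analyticOnNhd_const.add (analyticOnNhd_id.mul analyticOnNhd_const)
    · refine analytic_inv _ (fun a b => ?_) (fun t => det_one_sub_ne _ (hSk t)) a b
      simp only [Matrix.sub_apply, Matrix.smul_apply, smul_eq_mul]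
      exact analyticOnNhd_const.sub (analyticOnNhd_id.mul analyticOnNhd_const)

lemma analytic_T {n : ℕ} (i : Fin n) (M : ℝ → Matrix (Fin n) (Fin n) ℝ)
    (h : ∀ a b, AnalyticOnNhd ℝ (fun t => M t a b) Set.univ) :
    AnalyticOnNhd ℝ (fun t => (T i (M t)).det) Set.univ := by
  refine analytic_det _ fun a b => ?_
  by_cases hab : i ≤ a ∧ i ≤ b
  · simpa [T, hab] using h a b
  · simp only [T, Matrix.of_apply, if_neg hab]
    exact analyticOnNhd_const

lemma signedPerm_SO {n : ℕ} (q : Matrix (Fin n) (Fin n) ℝ) (hq : IsSignedPerm q)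
    (hdet : q.det = 1) : IsSO q := by
  refine ⟨?_, hdet⟩
  obtain ⟨σ, ε, hε, h⟩ := hq
  ext a b
  rw [Matrix.mul_apply, Finset.sum_eq_single (σ a)]
  · by_cases hab : a = b
    · subst hab
      rcases hε a with e | e <;> simp [h, e]
    · simp [h, hab]
  · intro c _ hc
    simp [h, hc]
  · simp

lemma mem_iff {n : ℕ} (q : Matrix (Fin n) (Fin n) ℝ) (hq : IsSO q)
    (k : {k : Matrix (Fin n) (Fin n) ℝ // IsSO k}) :
    k ∈ FactorSet q ↔ Good (k.1 * qᵀ) := by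
  have hqq : q * qᵀ = 1 := mul_eq_one_comm.mp hq.1
  constructor
  · rintro ⟨u, l, d, hu, hl, hd, -, hk⟩
    rw [hk, Matrix.mul_assoc _ q, hqq, Matrix.mul_one]
    exact good_of_factor u l d hu hl hd
  · intro h
    obtain ⟨u, l, d, hu, hl, hd, hdd, he⟩ := exists_factor _ h (SO_mul k.2 (SO_transpose hq)).2
    refine ⟨u, l, d, hu, hl, hd, hdd, ?_⟩
    rw [← he, Matrix.mul_assoc, hq.1, Matrix.mul_one]

lemma continuous_T {n : ℕ} (i : Fin n) : Continuous (T i : Matrix (Fin n) (Fin n) ℝ → _) := by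
  refine continuous_matrix fun a b => ?_
  by_cases hab : i ≤ a ∧ i ≤ b
  · simp only [T, Matrix.of_apply, if_pos hab]
    exact continuous_id.matrix_elem a b
  · simp only [T, Matrix.of_apply, if_neg hab]
    exact continuous_const

end ULFact

open ULFact in
theorem stmt_7 (n : ℕ) (hn : 1 ≤ n) (q : Matrix (Fin n) (Fin n) ℝ)
    (hq : IsSignedPerm q) (hdet : q.det = 1) :
    IsOpen (FactorSet q) ∧ Dense (FactorSet q) := by
  have hqs := signedPerm_SO q hq hdet
  constructor
  · have : FactorSet q = ⋂ i : Fin n, {k | (T i (k.1 * qᵀ)).det ≠ 0} := by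
      ext k
      rw [mem_iff q hqs k]
      simp [Good]
    rw [this]
    refine isOpen_iInter_of_finite fun i => ?_
    refine isOpen_ne_fun ?_ continuous_const
    exact ((continuous_T i).comp (continuous_subtype_val.matrix_mul continuous_const)).matrix_det
  · intro k
    obtain ⟨R, hR, hR0, hR1, hRa⟩ := exists_curve (k.1 * qᵀ) (SO_mul k.2 (SO_transpose hqs))
    let f : ℝ → {k : Matrix (Fin n) (Fin n) ℝ // IsSO k} := fun t => ⟨R t * q, SO_mul (hR t) hqs⟩
    have hRc : Continuous R := continuous_matrix fun a b => by
      have := (hRa a b).continuousOn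
      rwa [continuousOn_univ] at this
    have hf : Continuous f := (hRc.matrix_mul continuous_const).subtype_mk _
    have hf0 : f 0 = k := by
      apply Subtype.ext
      simp only [f]
      rw [hR0, Matrix.mul_assoc, hqs.1, Matrix.mul_one]
    have hlim : Filter.Tendsto f (nhdsWithin 0 {0}ᶜ) (nhds k) := by
      have := hf.tendsto 0
      rw [hf0] at this
      exact this.mono_left nhdsWithin_le_nhds
    refine mem_closure_of_tendsto hlim ?_
    have hev : ∀ i : Fin n, ∀ᶠ t in nhdsWithin (0:ℝ) {0}ᶜ, (T i (R t)).det ≠ 0 := by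
      intro i
      have ha := analytic_T i R hRa
      rcases (ha 0 (Set.mem_univ _)).eventually_eq_zero_or_eventually_ne_zero with h | h
      · exfalso
        have := ha.eqOn_zero_of_preconnected_of_eventuallyEq_zero isPreconnected_univ
          (Set.mem_univ 0) h (Set.mem_univ 1)
        exact hR1 i this
      · exact h
    filter_upwards [Filter.eventually_all.mpr hev] with t ht
    rw [mem_iff q hqs]
    simp only [f]
    rw [Matrix.mul_assoc, mul_eq_one_comm.mp hqs.1, Matrix.mul_one]
    exact ht
end

section
/- Let n ≥ 1 and let p be a profile. Let Y be a real symmetric n×n matrix with trace 0, having n distinct (real) eigenvalues, and having profile p. Then for every real n×n matrix Z with trace 0 there exist a skew-symmetric matrix K and a real n×n matrix V with trace 0 and profile p such that Z = KY − YK + V. -/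
open Matrix Polynomial

/-- A profile: a set of index pairs `(i,j)` with `j < i`, closed under moving
towards the diagonal. -/
def IsProfile {n : ℕ} (p : Set (Fin n × Fin n)) : Prop :=
  (∀ ij ∈ p, ij.2 < ij.1) ∧
  ∀ ij ∈ p, ∀ i' j' : Fin n, j' < i' → i' ≤ ij.1 → ij.2 ≤ j' → (i', j') ∈ p

/-- `M` has profile `p` if all its strictly lower triangular entries outside `p` vanish. -/
def HasProfile {n : ℕ} (M : Matrix (Fin n) (Fin n) ℝ) (p : Set (Fin n × Fin n)) : Prop :=
  ∀ i j : Fin n, j < i → (i, j) ∉ p → M i j = 0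

lemma commute_symm {n : ℕ} (Y N : Matrix (Fin n) (Fin n) ℝ) (hsymm : Yᵀ = Y)
    (heig : ∃ lam : Fin n → ℝ, Function.Injective lam ∧
      Y.charpoly = ∏ i : Fin n, (Polynomial.X - Polynomial.C (lam i)))
    (hc : Y * N = N * Y) : Nᵀ = N := by
  have hA : Y.IsHermitian := by
    rw [Matrix.IsHermitian, Matrix.conjTranspose_eq_transpose_of_trivial, hsymm]
  obtain ⟨lam, hinj, hchar⟩ := heig
  have hroots := hA.roots_charpoly_eq_eigenvalues
  have hev : Function.Injective hA.eigenvalues := by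
    have h1 : Y.charpoly.roots = Multiset.map lam Finset.univ.val := by
      rw [hchar, Polynomial.roots_prod]
      · simp
      · simp [Finset.prod_ne_zero_iff, Polynomial.X_sub_C_ne_zero]
    have h2 : (Multiset.map lam Finset.univ.val).Nodup :=
      Multiset.Nodup.map hinj Finset.univ.nodup
    rw [← h1, hroots] at h2
    intro i j hij
    exact Multiset.inj_on_of_nodup_map h2 i (Finset.mem_univ_val i) j (Finset.mem_univ_val j)
      (by simpa using hij)
  have hsp := hA.spectral_theorem
  rw [Unitary.conjStarAlgAut_apply] at hsp
  set U : Matrix (Fin n) (Fin n) ℝ := hA.eigenvectorUnitary.1 with hU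
  have hU1 : star U * U = 1 := Unitary.coe_star_mul_self _
  have hU2 : U * star U = 1 := Unitary.coe_mul_star_self _
  set D : Matrix (Fin n) (Fin n) ℝ := diagonal (RCLike.ofReal ∘ hA.eigenvalues) with hD
  have hst : star U = Uᵀ := by
    rw [Matrix.star_eq_conjTranspose, Matrix.conjTranspose_eq_transpose_of_trivial]
  rw [hst] at hsp hU1 hU2
  have hDY : Uᵀ * Y * U = D := by
    calc Uᵀ * Y * U = Uᵀ * (U * D * Uᵀ) * U := by rw [← hsp]
      _ = (Uᵀ * U) * D * (Uᵀ * U) := by simp only [Matrix.mul_assoc]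
      _ = D := by rw [hU1]; simp
  set C := Uᵀ * N * U with hC
  have hDC : D * C = C * D := by
    calc D * C = Uᵀ * Y * (U * Uᵀ) * N * U := by rw [← hDY, hC]; simp only [Matrix.mul_assoc]
      _ = Uᵀ * (Y * N) * U := by rw [hU2]; simp [Matrix.mul_assoc]
      _ = Uᵀ * N * (U * Uᵀ) * Y * U := by rw [hc, hU2]; simp [Matrix.mul_assoc]
      _ = C * D := by rw [← hDY, hC]; simp only [Matrix.mul_assoc]
  have hCs : Cᵀ = C := by
    have hz : ∀ i j, i ≠ j → C i j = 0 := by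
      intro i j hij
      have h := congrFun (congrFun hDC i) j
      rw [hD, Matrix.diagonal_mul, Matrix.mul_diagonal] at h
      simp only [Function.comp, RCLike.ofReal_real_eq_id, id] at h
      have h3 : (hA.eigenvalues i - hA.eigenvalues j) * C i j = 0 := by linarith
      exact (mul_eq_zero.mp h3).resolve_left (sub_ne_zero.mpr fun h => hij (hev h))
    ext i j
    by_cases hij : i = j
    · subst hij; rfl
    · rw [Matrix.transpose_apply, hz i j hij, hz j i (Ne.symm hij)]
  have hN : N = U * C * Uᵀ := by
    calc N = (U * Uᵀ) * N * (U * Uᵀ) := by rw [hU2]; simp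
      _ = _ := by rw [hC]; simp only [Matrix.mul_assoc]
  rw [hN]
  simp only [Matrix.transpose_mul, Matrix.transpose_transpose, hCs, Matrix.mul_assoc]

lemma dual_zero {n : ℕ} (p : Set (Fin n × Fin n)) (hp : IsProfile p)
    (Y N : Matrix (Fin n) (Fin n) ℝ) (hsymm : Yᵀ = Y)
    (heig : ∃ lam : Fin n → ℝ, Function.Injective lam ∧
      Y.charpoly = ∏ i : Fin n, (Polynomial.X - Polynomial.C (lam i)))
    (hYp : HasProfile Y p)
    (hN1 : ∀ i j, i ≤ j → N j i = 0) (hN2 : ∀ i j, (i, j) ∈ p → N j i = 0)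
    (hB : (Y * N - N * Y)ᵀ = Y * N - N * Y) : N = 0 := by
  have hs : ∀ i j, Y i j = Y j i := fun i j => congrFun (congrFun hsymm j) i
  have hY0 : ∀ i j, i ≠ j → (i, j) ∉ p → (j, i) ∉ p → Y i j = 0 := by
    intro i j hij h1 h2
    rcases lt_or_gt_of_ne hij with h | h
    · rw [hs]; exact hYp j i h h2
    · exact hYp i j h h1
  have hlow : ∀ i j, j ≤ i → (Y * N - N * Y) i j = 0 := by
    intro i j hji
    rw [Matrix.sub_apply, Matrix.mul_apply, Matrix.mul_apply, Finset.sum_eq_zero,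
      Finset.sum_eq_zero, sub_zero]
    · intro k _
      by_cases hki : k ≤ i
      · rw [hN1 k i hki, zero_mul]
      · push Not at hki
        by_cases hkp : (k, j) ∈ p
        · rw [hN2 k i (hp.2 _ hkp k i hki le_rfl hji), zero_mul]
        · rw [hYp k j (lt_of_le_of_lt hji hki) hkp, mul_zero]
    · intro k _
      by_cases hjk : j ≤ k
      · rw [hN1 j k hjk, mul_zero]
      · push Not at hjk
        by_cases hkp : (i, k) ∈ p
        · rw [hN2 j k (hp.2 _ hkp j k hjk hji le_rfl), mul_zero]
        · rw [hYp i k (lt_of_lt_of_le hjk hji) hkp, zero_mul]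
  have hz : Y * N - N * Y = 0 := by
    ext i j
    rcases le_total j i with h | h
    · exact hlow i j h
    · rw [← hB]; exact hlow j i h
  have hNs := commute_symm Y N hsymm heig (sub_eq_zero.mp hz)
  ext i j
  rcases le_total j i with h | h
  · exact hN1 j i h
  · rw [← hNs]; exact hN1 i j h

theorem stmt_11 (n : ℕ) (hn : 1 ≤ n) (p : Set (Fin n × Fin n)) (hp : IsProfile p)
    (Y : Matrix (Fin n) (Fin n) ℝ) (hsymm : Yᵀ = Y) (htr : Y.trace = 0)
    (heig : ∃ lam : Fin n → ℝ, Function.Injective lam ∧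
      Y.charpoly = ∏ i : Fin n, (Polynomial.X - Polynomial.C (lam i)))
    (hYp : HasProfile Y p) :
    ∀ Z : Matrix (Fin n) (Fin n) ℝ, Z.trace = 0 →
      ∃ K V : Matrix (Fin n) (Fin n) ℝ, Kᵀ = -K ∧ V.trace = 0 ∧ HasProfile V p ∧
        Z = K * Y - Y * K + V := by
  intro Z hZ
  let R : Submodule ℝ (Matrix (Fin n) (Fin n) ℝ) :=
    { carrier := {M | ∃ K V : Matrix (Fin n) (Fin n) ℝ, Kᵀ = -K ∧ HasProfile V p ∧
        M = K * Y - Y * K + V}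
      zero_mem' := ⟨0, 0, by simp, fun _ _ _ _ => rfl, by simp⟩
      add_mem' := by
        rintro _ _ ⟨K, V, hK, hV, rfl⟩ ⟨K', V', hK', hV', rfl⟩
        refine ⟨K + K', V + V', ?_, ?_, ?_⟩
        · rw [Matrix.transpose_add, hK, hK']; abel
        · intro i j h1 h2
          rw [Matrix.add_apply, hV i j h1 h2, hV' i j h1 h2, add_zero]
        · rw [Matrix.add_mul, Matrix.mul_add]; abel
      smul_mem' := by
        rintro c _ ⟨K, V, hK, hV, rfl⟩
        refine ⟨c • K, c • V, ?_, ?_, ?_⟩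
        · rw [Matrix.transpose_smul, hK, smul_neg]
        · intro i j h1 h2
          rw [Matrix.smul_apply, hV i j h1 h2, smul_zero]
        · rw [Matrix.smul_mul, Matrix.mul_smul, smul_add, smul_sub] }
  have hR : R = ⊤ := by
    by_contra hne
    obtain ⟨f, hf0, hf⟩ := Submodule.exists_le_ker_of_lt_top R (lt_top_iff_ne_top.mpr hne)
    let N : Matrix (Fin n) (Fin n) ℝ := Matrix.of fun j i => f (Matrix.single i j 1)
    have hfN : ∀ M, f M = (N * M).trace := by
      intro M
      conv_lhs => rw [Matrix.matrix_eq_sum_single M]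
      have : ∀ i j, f (Matrix.single i j (M i j)) = N j i * M i j := by
        intro i j
        have : Matrix.single i j (M i j) = M i j • Matrix.single i j (1 : ℝ) := by
          rw [Matrix.smul_single]; simp
        rw [this, map_smul, smul_eq_mul, mul_comm]; rfl
      simp only [map_sum, this, Matrix.trace, Matrix.diag, Matrix.mul_apply]
      rw [Finset.sum_comm]
    have hRz : ∀ K V : Matrix (Fin n) (Fin n) ℝ, Kᵀ = -K → HasProfile V p →
        f (K * Y - Y * K + V) = 0 := fun K V hK hV => hf ⟨K, V, hK, hV, rfl⟩
    have hsingle : ∀ i j : Fin n, (j < i → (i, j) ∈ p) → N j i = 0 := by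
      intro i j hij
      have := hRz 0 (Matrix.single i j 1) (by simp) (by
        intro a b hab hn
        rw [Matrix.single_apply, if_neg]
        rintro ⟨rfl, rfl⟩
        exact hn (hij hab))
      simpa [N] using this
    have hB : (Y * N - N * Y)ᵀ = Y * N - N * Y := by
      have key : ∀ A : Matrix (Fin n) (Fin n) ℝ,
          ((Y * N - N * Y) * (A - Aᵀ)).trace = 0 := by
        intro A
        have h := hRz (A - Aᵀ) 0 (by rw [Matrix.transpose_sub, Matrix.transpose_transpose]; abel)
          (fun _ _ _ _ => rfl)
        rw [add_zero, hfN, Matrix.mul_sub, Matrix.trace_sub, ← Matrix.mul_assoc,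
          Matrix.trace_mul_comm, ← Matrix.mul_assoc, ← Matrix.mul_assoc, ← Matrix.trace_sub,
          ← Matrix.sub_mul] at h
        exact h
      ext i j
      have h := key (Matrix.single i j 1)
      rw [Matrix.mul_sub, Matrix.trace_sub, Matrix.transpose_single,
        Matrix.trace_mul_single, Matrix.trace_mul_single] at h
      simp only [Matrix.transpose_apply]
      simp at h ⊢
      linarith
    have hN0 : N = 0 := dual_zero p hp Y N hsymm heig hYp
      (fun i j hij => hsingle i j fun h => absurd h (not_lt.mpr hij))
      (fun i j hij => hsingle i j fun _ => hij) hB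
    apply hf0
    ext M
    rw [hfN, hN0]; simp
  obtain ⟨K, V, hK, hV, h⟩ : Z ∈ R := hR ▸ Submodule.mem_top
  refine ⟨K, V, hK, ?_, hV, h⟩
  rw [h, Matrix.trace_add, Matrix.trace_sub, Matrix.trace_mul_comm, sub_self, zero_add] at hZ
  exact hZ
end
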